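/- For every ν > −1 and all t > 0, x > 0, z > 0: ∫₀^∞ I_ν(√(zv)) · (1/(2t)) · e^{(x−v)/(2t)} · J_ν(√(vx)/t) dv = e^{tz/2} · J_ν(√(zx)). -/

import Mathlib

open MeasureTheory Real

/-- The Bessel function of the first kind `J_ν(z)`. -/
noncomputable def besselJ (ν z : ℝ) : ℝ :=
  ∑' n : ℕ, ((-1 : ℝ) ^ n / (Real.Gamma ((n : ℝ) + 1) * Real.Gamma ((n : ℝ) + 1 + ν))) *
    (z / 2) ^ (2 * (n : ℝ) + ν)

/-- The modified Bessel function of the first kind `I_ν(z)`. -/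
noncomputable def besselI (ν z : ℝ) : ℝ :=
  ∑' n : ℕ, ((1 : ℝ) / (Real.Gamma ((n : ℝ) + 1) * Real.Gamma ((n : ℝ) + 1 + ν))) *
    (z / 2) ^ (2 * (n : ℝ) + ν)

/-!
Both `I_ν(y)` and `J_ν(y)` are `(y / 2) ^ ν` times the entire Bessel–Clifford function `C_ν`,
evaluated at `y² / 4` and `-y² / 4`. The integral is therefore a case of Weber's second exponential
integral `∫₀^∞ v ^ ν e ^ (-p v) C_ν(a v) C_ν(b v) dv`. Integrating the double power series termwise
turns its `(m, n)`-th term into a multiple of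
`Γ(m + n + ν + 1) / (m! n! Γ(m + ν + 1) Γ(n + ν + 1))`,
and the Chu–Vandermonde identity expands this quotient as
`∑ₖ 1 / ((m - k)! (n - k)! k! Γ(k + ν + 1))`. Summing over `m - k`, `n - k` and `k` separately gives
`e ^ (a / p) e ^ (b / p) C_ν(a b / p²) / p ^ (ν + 1)`; the same computation with `|a|` and `|b|`
justifies the interchange of sum and integral.
-/

open Finset
open scoped Nat

/-- The `n`-th Taylor coefficient `1 / (n! Γ(n + 1 + ν))` of the Bessel–Clifford function of order
`ν`. At a pole of `Γ`, where `Real.Gamma` is `0`, it is `0`, as it should be. -/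
noncomputable def besselCliffordCoeff (ν : ℝ) (n : ℕ) : ℝ :=
  (n ! * Gamma (n + 1 + ν))⁻¹

/-- The Bessel–Clifford function `C_ν(w) = ∑ wⁿ / (n! Γ(n + 1 + ν))`, the entire function common to
`I_ν(y) = (y / 2) ^ ν * C_ν(y² / 4)` and `J_ν(y) = (y / 2) ^ ν * C_ν(-y² / 4)`. -/
noncomputable def besselClifford (ν w : ℝ) : ℝ :=
  ∑' n : ℕ, besselCliffordCoeff ν n * w ^ n

theorem ofReal_besselCliffordCoeff (ν : ℝ) (n : ℕ) :
    (besselCliffordCoeff ν n : ℂ) = Complex.regularizedHGFunCoeff 0 {(1 + ν : ℂ)} n := by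
  simp [besselCliffordCoeff, Complex.regularizedHGFunCoeff, ← Complex.Gamma_ofReal, add_comm,
    add_left_comm]

theorem summable_norm_besselCliffordCoeff_mul_pow (ν w : ℝ) :
    Summable fun n ↦ ‖besselCliffordCoeff ν n * w ^ n‖ := by
  have hradius : ‖w‖₊ < (Complex.regularizedHGFunSeries 0 {(1 + ν : ℂ)}).radius := by
    rw [Complex.radius_regularizedHGFunSeries_eq_top (by simp)]
    exact ENNReal.coe_lt_top
  refine (FormalMultilinearSeries.summable_norm_mul_pow _ hradius).congr fun n ↦ ?_
  rw [Complex.regularizedHGFunSeries, FormalMultilinearSeries.ofScalars_norm,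
    ← ofReal_besselCliffordCoeff, Complex.norm_real, coe_nnnorm, norm_mul, norm_pow]

theorem besselCliffordCoeff_pos {ν : ℝ} (hν : -1 < ν) (n : ℕ) : 0 < besselCliffordCoeff ν n := by
  have hΓ : 0 < Gamma (n + 1 + ν) :=
    Gamma_pos_of_pos (by linarith [n.cast_nonneg (α := ℝ)])
  unfold besselCliffordCoeff
  positivity

theorem half_rpow_two_mul_natCast_add {y : ℝ} (hy : 0 < y) (ν : ℝ) (n : ℕ) :
    (y / 2) ^ (2 * (n : ℝ) + ν) = (y / 2) ^ ν * (y ^ 2 / 4) ^ n := by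
  rw [add_comm, rpow_add (by positivity), rpow_mul (by positivity), rpow_natCast, rpow_two, div_pow]
  norm_num

theorem besselI_eq_rpow_mul_besselClifford {y : ℝ} (hy : 0 < y) (ν : ℝ) :
    besselI ν y = (y / 2) ^ ν * besselClifford ν (y ^ 2 / 4) := by
  rw [besselI, besselClifford, ← tsum_mul_left]
  refine tsum_congr fun n ↦ ?_
  rw [half_rpow_two_mul_natCast_add hy, besselCliffordCoeff, Gamma_nat_eq_factorial]
  ring

theorem besselJ_eq_rpow_mul_besselClifford {y : ℝ} (hy : 0 < y) (ν : ℝ) :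
    besselJ ν y = (y / 2) ^ ν * besselClifford ν (-(y ^ 2 / 4)) := by
  rw [besselJ, besselClifford, ← tsum_mul_left]
  refine tsum_congr fun n ↦ ?_
  rw [half_rpow_two_mul_natCast_add hy, besselCliffordCoeff, Gamma_nat_eq_factorial,
    neg_pow (y ^ 2 / 4)]
  ring

theorem Gamma_add_natCast {s : ℝ} (hs : ∀ k : ℕ, s ≠ -k) (n : ℕ) :
    Gamma (s + n) = (ascPochhammer ℝ n).eval s * Gamma s := by
  induction n with
  | zero => simp
  | succ n ih =>
    have hsn : s + n ≠ 0 := fun h ↦ hs n (eq_neg_of_add_eq_zero_left h)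
    rw [Nat.cast_succ, ← add_assoc, Gamma_add_one hsn, ih, ascPochhammer_succ_eval]
    ring

theorem ring_choose_add_natCast_eq_Gamma_div {s : ℝ} (hs : ∀ k : ℕ, s + 1 ≠ -k) (n : ℕ) :
    Ring.choose (s + n) n = Gamma (s + 1 + n) / (n ! * Gamma (s + 1)) := by
  have hpoch : (n ! : ℝ) * Ring.choose (s + n) n = (ascPochhammer ℝ n).eval (s + 1) := by
    rw [← Polynomial.ascPochhammer_smeval_eq_eval,
      ← Ring.factorial_nsmul_multichoose_eq_ascPochhammer, Ring.multichoose_eq, nsmul_eq_mul,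
      add_right_comm, add_sub_cancel_right]
  have hΓ : Gamma (s + 1) ≠ 0 := Gamma_ne_zero hs
  rw [Gamma_add_natCast hs, ← hpoch]
  field_simp

theorem Gamma_div_eq_sum_choose_mul {ν : ℝ} (hν : -1 < ν) (m n : ℕ) :
    Gamma (m + ν + 1 + n) / (n ! * Gamma (m + ν + 1)) =
      ∑ k ∈ range (n + 1),
        (m.choose k : ℝ) * (Gamma (n + ν + 1) / ((n - k)! * Gamma (k + ν + 1))) := by
  have ne_neg_natCast (i j : ℕ) : i + ν + 1 ≠ -(j : ℝ) := by
    linarith [i.cast_nonneg (α := ℝ), j.cast_nonneg (α := ℝ)]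
  rw [← ring_choose_add_natCast_eq_Gamma_div (ne_neg_natCast m), add_assoc, add_comm ν,
    Ring.add_choose_eq n (Commute.all _ _),
    Nat.sum_antidiagonal_eq_sum_range_succ fun i j ↦ Ring.choose (m : ℝ) i * Ring.choose (n + ν) j]
  refine sum_congr rfl fun k hk ↦ ?_
  have hkn : (n : ℝ) = k + (n - k : ℕ) := by
    rw [Nat.cast_sub (mem_range_succ_iff.mp hk), add_sub_cancel]
  rw [Ring.choose_natCast, show n + ν = k + ν + (n - k : ℕ) by rw [hkn]; ring,
    ring_choose_add_natCast_eq_Gamma_div (ne_neg_natCast k), add_right_comm _ (1 : ℝ)]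

theorem Gamma_mul_besselCliffordCoeff_mul {ν : ℝ} (hν : -1 < ν) (m n : ℕ) :
    Gamma (m + n + ν + 1) * (besselCliffordCoeff ν m * besselCliffordCoeff ν n) =
      ∑ k ∈ range (min m n + 1),
        ((m - k)! : ℝ)⁻¹ * ((n - k)! : ℝ)⁻¹ * besselCliffordCoeff ν k := by
  have hΓ : Gamma (n + ν + 1) ≠ 0 :=
    (Gamma_pos_of_pos (by linarith [n.cast_nonneg (α := ℝ)])).ne'
  have coeff_eq (k : ℕ) : besselCliffordCoeff ν k = (k ! * Gamma (k + ν + 1))⁻¹ := by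
    rw [besselCliffordCoeff, add_right_comm]
  calc
    _ = (m ! * Gamma (n + ν + 1))⁻¹ *
        (Gamma (m + ν + 1 + n) / (n ! * Gamma (m + ν + 1))) := by
      rw [coeff_eq, coeff_eq, show m + n + ν + 1 = m + ν + 1 + n by ring]
      ring
    _ = ∑ k ∈ range (n + 1),
        m.choose k * ((m ! : ℝ)⁻¹ * ((n - k)! : ℝ)⁻¹ * (Gamma (k + ν + 1))⁻¹) := by
      rw [Gamma_div_eq_sum_choose_mul hν, mul_sum]
      refine sum_congr rfl fun k _ ↦ ?_
      field_simp
    _ = ∑ k ∈ range (min m n + 1),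
        m.choose k * ((m ! : ℝ)⁻¹ * ((n - k)! : ℝ)⁻¹ * (Gamma (k + ν + 1))⁻¹) := by
      refine (sum_subset (range_mono (by omega)) fun k hkn hkmin ↦ ?_).symm
      rw [mem_range] at hkn hkmin
      rw [Nat.choose_eq_zero_of_lt (by omega), Nat.cast_zero, zero_mul]
    _ = _ := by
      refine sum_congr rfl fun k hk ↦ ?_
      have hkm : k ≤ m := by rw [mem_range] at hk; omega
      rw [Nat.cast_choose ℝ hkm, coeff_eq]
      field_simp

theorem hasSum_sum_range_min {M : Type*} [AddCommMonoid M] [TopologicalSpace M] [ContinuousAdd M]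
    [RegularSpace M] {f : (ℕ × ℕ) × ℕ → M} {s : M} (hf : HasSum f s) :
    HasSum (fun p : ℕ × ℕ ↦ ∑ k ∈ range (min p.1 p.2 + 1), f ((p.1 - k, p.2 - k), k)) s := by
  let shift (q : (ℕ × ℕ) × ℕ) : ℕ × ℕ := (q.1.1 + q.2, q.1.2 + q.2)
  let unshift (p : ℕ × ℕ) (k : ℕ) : (ℕ × ℕ) × ℕ := ((p.1 - k, p.2 - k), k)
  have unshift_injective (p : ℕ × ℕ) : Function.Injective (unshift p) :=
    fun _ _ h ↦ congrArg Prod.snd h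
  have mem_fiber (p : ℕ × ℕ) (q : (ℕ × ℕ) × ℕ) :
      q ∈ (range (min p.1 p.2 + 1)).image (unshift p) ↔ shift q = p := by
    simp only [mem_image, mem_range, unshift, shift, Prod.ext_iff]
    constructor
    · rintro ⟨k, hk, ⟨h₁, h₂⟩, rfl⟩
      omega
    · exact fun h ↦ ⟨q.2, by omega⟩
  refine ((Equiv.sigmaFiberEquiv shift).hasSum_iff.mpr hf).sigma fun p ↦ ?_
  rw [← sum_image (f := f) (unshift_injective p).injOn]
  exact (Equiv.subtypeEquivRight (mem_fiber p)).hasSum_iff.mp (Finset.hasSum _ f)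

theorem Gamma_mul_besselCliffordCoeff_mul_pow {ν : ℝ} (hν : -1 < ν) (a b : ℝ) (m n : ℕ) :
    Gamma (m + n + ν + 1) * (besselCliffordCoeff ν m * a ^ m * (besselCliffordCoeff ν n * b ^ n)) =
      ∑ k ∈ range (min m n + 1), a ^ (m - k) / (m - k)! * (b ^ (n - k) / (n - k)!) *
        (besselCliffordCoeff ν k * (a * b) ^ k) := by
  rw [mul_mul_mul_comm, ← mul_assoc, Gamma_mul_besselCliffordCoeff_mul hν, sum_mul]
  refine sum_congr rfl fun k hk ↦ ?_
  rw [mem_range] at hk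
  rw [← pow_sub_mul_pow a (show k ≤ m by omega), ← pow_sub_mul_pow b (show k ≤ n by omega)]
  ring

theorem hasSum_mul_mul_of_summable_norm {ι κ τ R : Type*} [NormedRing R] [CompleteSpace R]
    {f : ι → R} {g : κ → R} {h : τ → R} {r s u : R} (hf : HasSum f r) (hg : HasSum g s)
    (hh : HasSum h u) (hf' : Summable (‖f ·‖)) (hg' : Summable (‖g ·‖)) (hh' : Summable (‖h ·‖)) :
    HasSum (fun q : (ι × κ) × τ ↦ f q.1.1 * g q.1.2 * h q.2) (r * s * u) := by
  apply (hf.mul hg (summable_mul_of_summable_norm hf' hg')).mul hh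
  apply summable_mul_of_summable_norm (hf'.mul_norm hg') hh'

theorem hasSum_exp_mul_exp_mul_besselClifford (ν a b w : ℝ) :
    HasSum
      (fun q : (ℕ × ℕ) × ℕ ↦ a ^ q.1.1 / q.1.1 ! * (b ^ q.1.2 / q.1.2 !) *
        (besselCliffordCoeff ν q.2 * w ^ q.2))
      (exp a * exp b * besselClifford ν w) := by
  have hasSum_exp (y : ℝ) : HasSum (fun n : ℕ ↦ y ^ n / n !) (exp y) := by
    rw [exp_eq_exp_ℝ]
    exact NormedSpace.expSeries_div_hasSum_exp y
  have summable_clifford := summable_norm_besselCliffordCoeff_mul_pow ν w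
  apply hasSum_mul_mul_of_summable_norm (hasSum_exp a) (hasSum_exp b)
    summable_clifford.of_norm.hasSum (hasSum_exp a).summable.norm (hasSum_exp b).summable.norm
    summable_clifford

theorem hasSum_Gamma_mul_besselCliffordCoeff {ν : ℝ} (hν : -1 < ν) (a b : ℝ) :
    HasSum
      (fun i : ℕ × ℕ ↦ Gamma (i.1 + i.2 + ν + 1) *
        (besselCliffordCoeff ν i.1 * a ^ i.1 * (besselCliffordCoeff ν i.2 * b ^ i.2)))
      (exp (a + b) * besselClifford ν (a * b)) := by
  simp only [Gamma_mul_besselCliffordCoeff_mul_pow hν, exp_add]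
  apply hasSum_sum_range_min (hasSum_exp_mul_exp_mul_besselClifford ν a b (a * b))

/-- The `(m, n)`-th term of the double power series of `v ^ ν * e ^ (-p v) * C_ν(a v) * C_ν(b v)`,
the integrand of Weber's second exponential integral. -/
noncomputable def weberTerm (ν p a b : ℝ) (i : ℕ × ℕ) (v : ℝ) : ℝ :=
  v ^ ν * exp (-(p * v)) *
    (besselCliffordCoeff ν i.1 * (a * v) ^ i.1 * (besselCliffordCoeff ν i.2 * (b * v) ^ i.2))

theorem tsum_weberTerm (ν p a b v : ℝ) :
    ∑' i, weberTerm ν p a b i v =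
      v ^ ν * exp (-(p * v)) * (besselClifford ν (a * v) * besselClifford ν (b * v)) := by
  simp only [weberTerm]
  rw [tsum_mul_left, besselClifford, besselClifford, tsum_mul_tsum_of_summable_norm
    (summable_norm_besselCliffordCoeff_mul_pow ν _) (summable_norm_besselCliffordCoeff_mul_pow ν _)]

theorem weberTerm_eq_const_mul (ν p a b : ℝ) (i : ℕ × ℕ) {v : ℝ} (hv : 0 < v) :
    weberTerm ν p a b i v =
      besselCliffordCoeff ν i.1 * a ^ i.1 * (besselCliffordCoeff ν i.2 * b ^ i.2) *
        (v ^ (i.1 + i.2 + ν) * exp (-(p * v))) := by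
  rw [weberTerm, rpow_add hv, ← Nat.cast_add, rpow_natCast]
  ring

section Weber

variable {ν p : ℝ}

theorem norm_weberTerm (hν : -1 < ν) (a b : ℝ) (i : ℕ × ℕ) {v : ℝ} (hv : 0 < v) :
    ‖weberTerm ν p a b i v‖ = weberTerm ν p |a| |b| i v := by
  simp only [weberTerm, norm_eq_abs, abs_mul, abs_pow, abs_exp, abs_of_pos hv,
    abs_of_pos (rpow_pos_of_pos hv ν), abs_of_pos (besselCliffordCoeff_pos hν _)]

theorem integrableOn_weberTerm (hν : -1 < ν) (hp : 0 < p) (a b : ℝ) (i : ℕ × ℕ) :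
    IntegrableOn (weberTerm ν p a b i) (Set.Ioi 0) := by
  have hexponent : -1 < i.1 + i.2 + ν := by
    linarith [i.1.cast_nonneg (α := ℝ), i.2.cast_nonneg (α := ℝ)]
  have hgamma : IntegrableOn (fun v ↦ v ^ (i.1 + i.2 + ν) * exp (-(p * v))) (Set.Ioi 0) := by
    simpa using integrableOn_rpow_mul_exp_neg_mul_rpow hexponent one_pos hp
  exact IntegrableOn.congr_fun (hgamma.const_mul _)
    (fun v hv ↦ (weberTerm_eq_const_mul ν p a b i hv).symm) measurableSet_Ioi

theorem integral_weberTerm (hν : -1 < ν) (hp : 0 < p) (a b : ℝ) (i : ℕ × ℕ) :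
    ∫ v in Set.Ioi 0, weberTerm ν p a b i v =
      Gamma (i.1 + i.2 + ν + 1) * (besselCliffordCoeff ν i.1 * (a / p) ^ i.1 *
        (besselCliffordCoeff ν i.2 * (b / p) ^ i.2)) / p ^ (ν + 1) := by
  have hexponent : 0 < i.1 + i.2 + ν + 1 := by
    linarith [i.1.cast_nonneg (α := ℝ), i.2.cast_nonneg (α := ℝ)]
  have hgamma : ∫ v in Set.Ioi 0, v ^ (i.1 + i.2 + ν) * exp (-(p * v)) =
      Gamma (i.1 + i.2 + ν + 1) / (p ^ (i.1 + i.2) * p ^ (ν + 1)) := by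
    have h := integral_rpow_mul_exp_neg_mul_Ioi hexponent hp
    rw [add_sub_cancel_right] at h
    rw [h, one_div, inv_rpow hp.le, inv_mul_eq_div, add_assoc _ ν, rpow_add hp, ← Nat.cast_add,
      rpow_natCast]
  rw [setIntegral_congr_fun measurableSet_Ioi fun v hv ↦ weberTerm_eq_const_mul ν p a b i hv,
    integral_const_mul, hgamma]
  ring

theorem summable_integral_norm_weberTerm (hν : -1 < ν) (hp : 0 < p) (a b : ℝ) :
    Summable fun i ↦ ∫ v in Set.Ioi 0, ‖weberTerm ν p a b i v‖ := by
  have integral_norm (i : ℕ × ℕ) : ∫ v in Set.Ioi 0, ‖weberTerm ν p a b i v‖ =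
      ∫ v in Set.Ioi 0, weberTerm ν p |a| |b| i v :=
    setIntegral_congr_fun measurableSet_Ioi fun v hv ↦ norm_weberTerm hν a b i hv
  simp only [integral_norm, integral_weberTerm hν hp]
  exact (hasSum_Gamma_mul_besselCliffordCoeff hν (|a| / p) (|b| / p)).summable.div_const _

theorem integral_rpow_mul_exp_mul_besselClifford_mul_besselClifford (hν : -1 < ν) (hp : 0 < p)
    (a b : ℝ) :
    ∫ v in Set.Ioi 0, v ^ ν * exp (-(p * v)) *
        (besselClifford ν (a * v) * besselClifford ν (b * v)) =
      exp (a / p + b / p) * besselClifford ν (a / p * (b / p)) / p ^ (ν + 1) := by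
  simp only [← tsum_weberTerm]
  rw [← integral_tsum_of_summable_integral_norm (integrableOn_weberTerm hν hp a b)
    (summable_integral_norm_weberTerm hν hp a b)]
  simp only [integral_weberTerm hν hp]
  exact ((hasSum_Gamma_mul_besselCliffordCoeff hν (a / p) (b / p)).div_const _).tsum_eq

end Weber

theorem besselI_mul_besselJ_eq_rpow_mul_besselClifford {t x z v : ℝ} (ht : 0 < t) (hx : 0 < x)
    (hz : 0 < z) (hv : 0 < v) (ν : ℝ) :
    besselI ν √(z * v) * besselJ ν (√(v * x) / t) =
      (√(z * x) / 2) ^ ν * (1 / (2 * t)) ^ ν *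
        (v ^ ν * (besselClifford ν (z / 4 * v) * besselClifford ν (-(x / (4 * t ^ 2)) * v))) := by
  have hsqrt : √(z * v) / 2 * (√(v * x) / t / 2) = √(z * x) / 2 * (1 / (2 * t)) * v := by
    rw [sqrt_mul hz.le, sqrt_mul hv.le, sqrt_mul hz.le]
    linear_combination √z * √x / (4 * t) * mul_self_sqrt hv.le
  have hrpow : (√(z * v) / 2) ^ ν * (√(v * x) / t / 2) ^ ν =
      (√(z * x) / 2) ^ ν * (1 / (2 * t)) ^ ν * v ^ ν := by
    rw [← mul_rpow, hsqrt, mul_rpow, mul_rpow] <;> positivity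
  have hI : √(z * v) ^ 2 / 4 = z / 4 * v := by
    rw [sq_sqrt (by positivity)]
    ring
  have hJ : -((√(v * x) / t) ^ 2 / 4) = -(x / (4 * t ^ 2)) * v := by
    rw [div_pow, sq_sqrt (by positivity)]
    ring
  rw [besselI_eq_rpow_mul_besselClifford (by positivity),
    besselJ_eq_rpow_mul_besselClifford (by positivity), hI, hJ, mul_mul_mul_comm, hrpow, mul_assoc]

/-- Real form of the integral formula
`∫_{−∞}^0 J_ν(√(zy)) p_{J_ν}(−t, y|x) dy = e^{tz/2} J_ν(√(zx))`. -/
theorem besselI_besselJ_integral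
    (ν : ℝ) (hν : -1 < ν) (t x z : ℝ) (ht : 0 < t) (hx : 0 < x) (hz : 0 < z) :
    ∫ v in Set.Ioi (0 : ℝ),
        besselI ν (Real.sqrt (z * v)) * (1 / (2 * t)) * Real.exp ((x - v) / (2 * t)) *
          besselJ ν (Real.sqrt (v * x) / t)
      = Real.exp (t * z / 2) * besselJ ν (Real.sqrt (z * x)) := by
  let p : ℝ := 1 / (2 * t)
  have hp : 0 < p := by positivity
  let C : ℝ := (√(z * x) / 2) ^ ν * p ^ (ν + 1) * exp (x * p)
  calc
    _ = ∫ v in Set.Ioi 0, C * (v ^ ν * exp (-(p * v)) *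
        (besselClifford ν (z / 4 * v) * besselClifford ν (-(x / (4 * t ^ 2)) * v))) := by
      refine setIntegral_congr_fun measurableSet_Ioi fun v hv ↦ ?_
      have hexp : exp ((x - v) / (2 * t)) = exp (x * p) * exp (-(p * v)) := by
        rw [← exp_add, show (x - v) / (2 * t) = x * p + -(p * v) by ring]
      have hbessel := besselI_mul_besselJ_eq_rpow_mul_besselClifford ht hx hz hv ν
      simp only [hexp, C, rpow_add_one hp.ne']
      linear_combination p * exp (x * p) * exp (-(p * v)) * hbessel
    _ = C * (exp (t * z / 2 - x * p) * besselClifford ν (-(z * x / 4)) / p ^ (ν + 1)) := by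
      have hexponent : z / 4 / p + -(x / (4 * t ^ 2)) / p = t * z / 2 - x * p := by grind
      have hargument : z / 4 / p * (-(x / (4 * t ^ 2)) / p) = -(z * x / 4) := by grind
      rw [integral_const_mul, integral_rpow_mul_exp_mul_besselClifford_mul_besselClifford hν hp,
        hexponent, hargument]
    _ = exp (t * z / 2) * besselJ ν √(z * x) := by
      rw [besselJ_eq_rpow_mul_besselClifford (by positivity), sq_sqrt (by positivity), exp_sub]
      simp only [C]
      field_simp
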